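/- arXiv:1901.01993 — 2 statements merged into one kernel-verified Lean document; each statement's English description precedes it below -/
import Mathlib

section
/- Let M ≥ 5 be an integer and let a, b be integers with 1 ≤ a < b < M/2 and gcd(a,M) = gcd(b,M) = 1. Then for every integer n ≥ 1 and every integer m with 1 ≤ m ≤ Mn, the number of partitions of Mn into exactly m DISTINCT parts, each part congruent to a or M−a modulo M, is greater than or equal to the number of partitions of Mn into exactly m distinct parts, each part congruent to b or M−b modulo M. (This is part (i) of the second main theorem, equivalently Corollary 2(i): the coefficient d(m, Mn) in the expansion of (−sq^a, −sq^{M−a}; q^M)_∞ − (−sq^b, −sq^{M−b}; q^M)_∞ is nonnegative.) -/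
/-!
Let `D i` be the generating function of the `i`-element sets of natural numbers, graded by their
sum. Removing `0` from a set, or shifting the set down by one, gives
`(1 - X ^ (i + 1)) * D (i + 1) = X ^ i * D i`; hence `(∏ t ∈ T, (1 - X ^ t)) * D i` has nonnegative
coefficients for every set `T` of exponents in `[1, i]`.

The partitions into `i` distinct parts congruent to `c` and `j` distinct parts congruent to `-c`
modulo `M` have generating function `X ^ (c * i + (M - c) * j) * (D i * D j)(X ^ M)`. Pair `(i, j)`
with `(j, i)` and let `d = i - j ≥ 0`: the terms for `a` minus the terms for `b` are
`X ^ (M * j + a * d) * (1 - X ^ ((b - a) * d)) * (1 - X ^ ((M - a - b) * d)) * (D i * D j)(X ^ M)`.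
If `M ∣ b * d`, then `M ∣ a * d`, and this is a power series in `X ^ M` in which, after `X ^ M` is
replaced by `X`, the two factors are `1 - X ^ s` and `1 - X ^ t` with `s < t ≤ d ≤ i`, so it has
nonnegative coefficients. If `M ∤ b * d`, the terms for `b` contain no power of `X` whose exponent
is divisible by `M`.
-/

open Finset PowerSeries

section NonnegCoeff

variable {R : Type*} [Semiring R] [PartialOrder R] [IsOrderedRing R]

variable (R) in
/-- The subsemiring of power series over `R` all of whose coefficients are nonnegative. -/
def nonnegCoeff : Subsemiring R⟦X⟧ where
  carrier := {f | ∀ n, 0 ≤ coeff n f}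
  zero_mem' n := by simp
  one_mem' n := by rw [coeff_one]; split_ifs <;> simp
  add_mem' hf hg n := by rw [map_add]; exact add_nonneg (hf n) (hg n)
  mul_mem' hf hg n := by
    rw [coeff_mul]
    exact sum_nonneg fun p _ ↦ mul_nonneg (hf p.1) (hg p.2)

lemma X_mem_nonnegCoeff : (X : R⟦X⟧) ∈ nonnegCoeff R := fun n ↦ by
  rw [coeff_X]; split_ifs <;> simp

lemma mem_nonnegCoeff_of_one_sub_X_pow_mul_mem {R : Type*} [Ring R] [PartialOrder R]
    [IsOrderedRing R] {k : ℕ} (hk : k ≠ 0) {f : R⟦X⟧} (hf : (1 - X ^ k) * f ∈ nonnegCoeff R) :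
    f ∈ nonnegCoeff R := by
  intro n
  induction n using Nat.strong_induction_on with
  | _ n ih =>
    have hn : 0 ≤ coeff n f - coeff n (X ^ k * f) := by simpa [sub_mul] using hf n
    have hshift : 0 ≤ coeff n (X ^ k * f) := by
      rw [coeff_X_pow_mul']
      split_ifs
      · exact ih (n - k) (by omega)
      · exact le_rfl
    exact hshift.trans (sub_nonneg.mp hn)

end NonnegCoeff

section Expand

variable {R : Type*} [CommRing R] {M : ℕ} (hM : M ≠ 0) (n : ℕ) (f : R⟦X⟧)

lemma coeff_mul_X_pow_mul_expand (e : ℕ) :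
    coeff (M * n) (X ^ (M * e) * expand M hM f) = coeff n (X ^ e * f) := by
  rw [pow_mul, ← expand_X M hM, ← map_pow, ← map_mul, coeff_expand_mul]

lemma coeff_X_pow_mul_expand_eq_zero {N k : ℕ} (h : ¬∃ e, N = M * e + k) :
    coeff N (X ^ k * expand M hM f) = 0 := by
  rw [coeff_X_pow_mul']
  split_ifs with hk
  · refine coeff_expand_of_not_dvd M hM f fun ⟨e, he⟩ ↦ h ⟨e, by omega⟩
  · rfl

lemma coeff_mul_X_pow_mul_expand_of_not_dvd {k : ℕ} (hk : ¬M ∣ k) :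
    coeff (M * n) (X ^ k * expand M hM f) = 0 :=
  coeff_X_pow_mul_expand_eq_zero hM f fun ⟨e, he⟩ ↦
    hk ((Nat.dvd_add_right (dvd_mul_right M e)).mp ⟨n, he.symm⟩)

lemma expand_mem_nonnegCoeff [PartialOrder R] [IsOrderedRing R] {f : R⟦X⟧}
    (hf : f ∈ nonnegCoeff R) : expand M hM f ∈ nonnegCoeff R := fun n ↦ by
  rw [coeff_expand]
  split_ifs
  exacts [hf _, le_rfl]

end Expand

open Classical in
/-- The `i`-element sets of natural numbers drawn from `P` with sum `N`, that is, the partitions of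
`N` into `i` distinct parts from `P`, where `0` is allowed as a part if `0 ∈ P`. -/
noncomputable def distinctSets (P : Set ℕ) (i N : ℕ) : Finset (Finset ℕ) :=
  {S ∈ powersetCard i (range (N + 1)) | ↑S ⊆ P ∧ ∑ x ∈ S, x = N}

lemma mem_distinctSets {P : Set ℕ} {i N : ℕ} {S : Finset ℕ} :
    S ∈ distinctSets P i N ↔ ↑S ⊆ P ∧ #S = i ∧ ∑ x ∈ S, x = N := by
  have hrange (hS : ∑ x ∈ S, x = N) : S ⊆ range (N + 1) := fun x hx ↦
    mem_range_succ_iff.mpr (hS ▸ single_le_sum (f := id) (fun _ _ ↦ Nat.zero_le _) hx)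
  grind [distinctSets]

/-- The generating function of partitions into `i` distinct parts from `P`, that is, the coefficient
of `s ^ i` in `∏ x ∈ P, (1 + s * X ^ x)`. -/
noncomputable def distinctGenFun (P : Set ℕ) (i : ℕ) : ℤ⟦X⟧ :=
  PowerSeries.mk fun N ↦ (#(distinctSets P i N) : ℤ)

@[simp]
lemma coeff_distinctGenFun (P : Set ℕ) (i N : ℕ) :
    coeff N (distinctGenFun P i) = #(distinctSets P i N) :=
  coeff_mk _ _

lemma distinctGenFun_mem_nonnegCoeff (P : Set ℕ) (i : ℕ) :
    distinctGenFun P i ∈ nonnegCoeff ℤ := fun N ↦ by simp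

lemma card_filter_partition_eq_card_distinctSets {P : Set ℕ} (hP : 0 ∉ P) (m N : ℕ)
    [DecidablePred fun p : N.Partition ↦
      Multiset.card p.parts = m ∧ p.parts.Nodup ∧ ∀ x ∈ p.parts, x ∈ P] :
    #{p : N.Partition | Multiset.card p.parts = m ∧ p.parts.Nodup ∧ ∀ x ∈ p.parts, x ∈ P} =
      #(distinctSets P m N) := by
  symm
  refine card_bij (fun S hS ↦ ⟨S.val, fun {x} hx ↦ ?_, ?_⟩) (fun S hS ↦ ?_)
    (fun S _ T _ h ↦ ?_) (fun p hp ↦ ?_)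
  · exact Nat.pos_of_ne_zero fun h ↦ hP ((mem_distinctSets.mp hS).1 (h ▸ hx))
  · simpa using (mem_distinctSets.mp hS).2.2
  · obtain ⟨hSP, hcard, -⟩ := mem_distinctSets.mp hS
    simpa using ⟨hcard, S.nodup, fun x hx ↦ hSP hx⟩
  · exact Finset.val_injective (congrArg Nat.Partition.parts h)
  · obtain ⟨hcard, hnodup, hpP⟩ := (mem_filter.mp hp).2
    refine ⟨⟨p.parts, hnodup⟩, mem_distinctSets.mpr ⟨hpP, hcard, ?_⟩, rfl⟩
    simpa [Finset.sum] using p.parts_sum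

lemma card_distinctSets_union {P Q : Set ℕ} (hPQ : Disjoint P Q) (m N : ℕ) :
    #(distinctSets (P ∪ Q) m N) = ∑ ij ∈ antidiagonal m, ∑ uv ∈ antidiagonal N,
      #(distinctSets P ij.1 uv.1) * #(distinctSets Q ij.2 uv.2) := by
  classical
  simp_rw [← card_product, ← sum_product', ← card_sigma]
  refine card_nbij' (fun S ↦ ⟨((#{x ∈ S | x ∈ P}, #{x ∈ S | x ∉ P}),
      (∑ x ∈ S with x ∈ P, x, ∑ x ∈ S with x ∉ P, x)), {x ∈ S | x ∈ P}, {x ∈ S | x ∉ P}⟩)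
    (fun k ↦ k.2.1 ∪ k.2.2) (fun S hS ↦ ?_) ?_ (fun S _ ↦ filter_union_filter_not_eq _ S) ?_
  · obtain ⟨hSPQ, hcard, hsum⟩ := mem_distinctSets.mp hS
    have hSQ : ↑{x ∈ S | x ∉ P} ⊆ Q := fun x hx ↦
      (hSPQ (mem_filter.mp hx).1).resolve_left (mem_filter.mp hx).2
    have hSP : ↑{x ∈ S | x ∈ P} ⊆ P := fun x hx ↦ (mem_filter.mp hx).2
    simp only [SetLike.mem_coe, mem_sigma, mem_product, HasAntidiagonal.mem_antidiagonal,
      mem_distinctSets, hSP, hSQ, card_filter_add_card_filter_not, sum_filter_add_sum_filter_not,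
      hcard, hsum, and_self]
  · rintro ⟨⟨⟨i, j⟩, ⟨u, v⟩⟩, A, B⟩ h
    obtain ⟨⟨rfl, rfl⟩, ⟨hA, rfl, rfl⟩, hB, rfl, rfl⟩ := by simpa [mem_distinctSets] using h
    have hAB : Disjoint A B := by exact_mod_cast hPQ.mono hA hB
    simpa [mem_distinctSets, card_union_of_disjoint hAB, sum_union hAB] using
      ⟨Set.subset_union_of_subset_left hA Q, Set.subset_union_of_subset_right hB P⟩
  · rintro ⟨⟨⟨i, j⟩, ⟨u, v⟩⟩, A, B⟩ h
    obtain ⟨-, ⟨hA, rfl, rfl⟩, hB, rfl, rfl⟩ := by simpa [mem_distinctSets] using h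
    have hBP : ∀ x ∈ B, x ∉ P := fun x hx ↦ hPQ.notMem_of_mem_right (hB hx)
    have hfilter : {x ∈ A ∪ B | x ∈ P} = A := by
      rw [filter_union, filter_true_of_mem hA, filter_false_of_mem hBP, union_empty]
    have hfilter_not : {x ∈ A ∪ B | x ∉ P} = B := by
      rw [filter_union, filter_true_of_mem hBP, filter_false_of_mem fun x hx ↦ not_not.mpr (hA hx),
        empty_union]
    simp only [hfilter, hfilter_not]

lemma distinctGenFun_union {P Q : Set ℕ} (hPQ : Disjoint P Q) (m : ℕ) :
    distinctGenFun (P ∪ Q) m =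
      ∑ ij ∈ antidiagonal m, distinctGenFun P ij.1 * distinctGenFun Q ij.2 := by
  ext N
  simp [coeff_mul, card_distinctSets_union hPQ]

section Affine

variable {M : ℕ} (hM : M ≠ 0) (c : ℕ) (P : Set ℕ) (i : ℕ)
include hM

lemma mul_add_right_injective : Function.Injective fun x ↦ M * x + c :=
  (add_left_injective c).comp (mul_right_injective₀ hM)

lemma mem_distinctSets_image_mul_add {N : ℕ} {S : Finset ℕ} :
    S ∈ distinctSets ((fun x ↦ M * x + c) '' P) i N ↔
      ∃ k, N = M * k + c * i ∧ ∃ A ∈ distinctSets P i k, A.image (fun x ↦ M * x + c) = S := by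
  have hinj := mul_add_right_injective hM c
  have hsum (A : Finset ℕ) : ∑ x ∈ A.image (fun x ↦ M * x + c), x = M * ∑ x ∈ A, x + c * #A := by
    simp [sum_image hinj.injOn, sum_add_distrib, mul_sum, mul_comm]
  simp only [mem_distinctSets, subset_set_image_iff]
  constructor
  · rintro ⟨⟨A, hA, rfl⟩, hcard, hN⟩
    rw [card_image_of_injective _ hinj] at hcard
    exact ⟨_, by rw [← hN, hsum, hcard], A, ⟨hA, hcard, rfl⟩, rfl⟩
  · rintro ⟨_, rfl, A, ⟨hA, rfl, rfl⟩, rfl⟩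
    exact ⟨⟨A, hA, rfl⟩, card_image_of_injective _ hinj, hsum A⟩

lemma distinctGenFun_image_mul_add :
    distinctGenFun ((fun x ↦ M * x + c) '' P) i =
      X ^ (c * i) * expand M hM (distinctGenFun P i) := by
  ext N
  by_cases hN : ∃ k, N = M * k + c * i
  · obtain ⟨k, rfl⟩ := hN
    rw [coeff_X_pow_mul, coeff_expand_mul, coeff_distinctGenFun, coeff_distinctGenFun]
    have : distinctSets ((fun x ↦ M * x + c) '' P) i (M * k + c * i) =
        (distinctSets P i k).image (image fun x ↦ M * x + c) := by
      ext S
      simp [mem_distinctSets_image_mul_add hM, hM]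
    rw [this, card_image_of_injective _ (image_injective (mul_add_right_injective hM c))]
  · rw [coeff_X_pow_mul_expand_eq_zero hM _ hN, coeff_distinctGenFun, Nat.cast_eq_zero,
      card_eq_zero, eq_empty_iff_forall_notMem]
    intro S hS
    obtain ⟨k, hk, -⟩ := (mem_distinctSets_image_mul_add hM c P i).mp hS
    exact hN ⟨k, hk⟩

end Affine

lemma distinctGenFun_zero (P : Set ℕ) : distinctGenFun P 0 = 1 := by
  ext N
  have h : distinctSets P 0 N = if N = 0 then {∅} else ∅ := by
    ext S
    rw [mem_distinctSets, card_eq_zero]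
    split_ifs with hN <;> aesop
  rw [coeff_distinctGenFun, h, coeff_one]
  split_ifs <;> simp

lemma distinctGenFun_singleton_one (x : ℕ) : distinctGenFun {x} 1 = X ^ x := by
  ext N
  have h : distinctSets {x} 1 N = if N = x then {{x}} else ∅ := by
    ext S
    rw [mem_distinctSets, card_eq_one]
    split_ifs with hN <;> aesop
  rw [coeff_distinctGenFun, h, coeff_X_pow]
  split_ifs <;> simp

lemma distinctGenFun_singleton_of_one_lt (x : ℕ) {i : ℕ} (hi : 1 < i) :
    distinctGenFun {x} i = 0 := by
  ext N
  rw [coeff_distinctGenFun, map_zero, Nat.cast_eq_zero, card_eq_zero, eq_empty_iff_forall_notMem]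
  intro S hS
  obtain ⟨hSx, rfl, -⟩ := mem_distinctSets.mp hS
  exact hi.not_ge (card_le_one_iff_subset_singleton.mpr ⟨x, by exact_mod_cast hSx⟩)

lemma distinctGenFun_insert {x : ℕ} {P : Set ℕ} (hx : x ∉ P) (i : ℕ) :
    distinctGenFun (insert x P) (i + 1) =
      distinctGenFun P (i + 1) + X ^ x * distinctGenFun P i := by
  rw [Set.insert_eq, distinctGenFun_union (Set.disjoint_singleton_left.mpr hx),
    Nat.sum_antidiagonal_succ, sum_eq_single (0, i), distinctGenFun_zero, one_mul, zero_add,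
    distinctGenFun_singleton_one]
  · rintro ⟨k, l⟩ hkl hne
    rw [HasAntidiagonal.mem_antidiagonal] at hkl
    rw [distinctGenFun_singleton_of_one_lt x (by grind), zero_mul]
  · simp

lemma distinctGenFun_univ_succ (i : ℕ) :
    distinctGenFun .univ (i + 1) =
      X ^ (i + 1) * distinctGenFun .univ (i + 1) + X ^ i * distinctGenFun .univ i := by
  have huniv : (Set.univ : Set ℕ) = insert 0 ((fun x ↦ 1 * x + 1) '' .univ) := by
    ext (_ | x) <;> simp
  have hshift (j : ℕ) : distinctGenFun ((fun x ↦ 1 * x + 1) '' .univ) j =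
      X ^ j * distinctGenFun .univ j := by
    rw [distinctGenFun_image_mul_add one_ne_zero, one_mul, expand_one_apply]
  conv_lhs => rw [huniv, distinctGenFun_insert (by simp), hshift, hshift, pow_zero, one_mul]

lemma one_sub_X_pow_mul_distinctGenFun_univ (i : ℕ) :
    (1 - X ^ (i + 1)) * distinctGenFun .univ (i + 1) = X ^ i * distinctGenFun .univ i := by
  linear_combination distinctGenFun_univ_succ i

lemma prod_one_sub_X_pow_mul_distinctGenFun_mem_nonnegCoeff {T : Finset ℕ} {i : ℕ}
    (hT : T ⊆ Icc 1 i) :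
    (∏ t ∈ T, (1 - X ^ t)) * distinctGenFun .univ i ∈ nonnegCoeff ℤ := by
  induction i generalizing T with
  | zero =>
    obtain rfl : T = ∅ := by simpa using hT
    simpa using distinctGenFun_mem_nonnegCoeff _ _
  | succ i ih =>
    have hXpow := pow_mem (X_mem_nonnegCoeff (R := ℤ)) i
    have hrec := one_sub_X_pow_mul_distinctGenFun_univ i
    by_cases hi : i + 1 ∈ T
    · rw [← mul_prod_erase T _ hi]
      convert mul_mem hXpow (ih (T := T.erase (i + 1)) (by grind)) using 1
      linear_combination (∏ t ∈ T.erase (i + 1), (1 - X ^ t)) * hrec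
    · refine mem_nonnegCoeff_of_one_sub_X_pow_mul_mem (k := i + 1) (by omega) ?_
      convert mul_mem hXpow (ih (T := T) (by grind)) using 1
      linear_combination (∏ t ∈ T, (1 - X ^ t)) * hrec

lemma setOf_mod_eq_image {M c : ℕ} (hc : c < M) :
    {x | x % M = c} = (fun x ↦ M * x + c) '' .univ := by
  ext x
  constructor
  · rintro rfl
    exact ⟨x / M, trivial, Nat.div_add_mod x M⟩
  · rintro ⟨y, -, rfl⟩
    simp [Nat.mod_eq_of_lt hc]

/-- The generating function of partitions into `i` distinct parts congruent to `c` and `j` distinct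
parts congruent to `c'` modulo `M`, for distinct residues `c, c' < M`. -/
noncomputable def residueGenFun (M : ℕ) [NeZero M] (c c' i j : ℕ) : ℤ⟦X⟧ :=
  X ^ (c * i + c' * j) *
    expand M (NeZero.ne M) (distinctGenFun .univ i * distinctGenFun .univ j)

section ResidueGenFun

variable {M : ℕ} [NeZero M] {c c' : ℕ}

lemma distinctGenFun_mod_eq_or_mod_eq (hc : c < M) (hc' : c' < M) (hne : c ≠ c') (m : ℕ) :
    distinctGenFun {x | x % M = c ∨ x % M = c'} m =
      ∑ ij ∈ antidiagonal m, residueGenFun M c c' ij.1 ij.2 := by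
  have hdisj : Disjoint {x | x % M = c} {x | x % M = c'} :=
    Set.disjoint_left.mpr fun x hx hx' ↦ hne (hx.symm.trans hx')
  rw [Set.ofPred_or, distinctGenFun_union hdisj, setOf_mod_eq_image hc, setOf_mod_eq_image hc']
  refine sum_congr rfl fun ij _ ↦ ?_
  rw [distinctGenFun_image_mul_add (NeZero.ne M), distinctGenFun_image_mul_add (NeZero.ne M),
    residueGenFun, map_mul, pow_add]
  ring

lemma residueGenFun_mem_nonnegCoeff (i j : ℕ) : residueGenFun M c c' i j ∈ nonnegCoeff ℤ :=
  mul_mem (pow_mem X_mem_nonnegCoeff _) <| expand_mem_nonnegCoeff _ <|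
    mul_mem (distinctGenFun_mem_nonnegCoeff _ _) (distinctGenFun_mem_nonnegCoeff _ _)

lemma residueGenFun_add_left (hc : c ≤ M) (j d : ℕ) :
    residueGenFun M c (M - c) (j + d) j = X ^ (M * j + c * d) *
      expand M (NeZero.ne M) (distinctGenFun .univ (j + d) * distinctGenFun .univ j) := by
  obtain ⟨c', hM⟩ := Nat.exists_eq_add_of_le hc
  have hexp : c * (j + d) + (M - c) * j = M * j + c * d := by
    rw [hM, Nat.add_sub_cancel_left]; ring
  rw [residueGenFun, hexp]

lemma residueGenFun_add_right (hc : c ≤ M) (j d : ℕ) :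
    residueGenFun M c (M - c) j (j + d) = X ^ (M * j + (M - c) * d) *
      expand M (NeZero.ne M) (distinctGenFun .univ (j + d) * distinctGenFun .univ j) := by
  obtain ⟨c', hM⟩ := Nat.exists_eq_add_of_le hc
  have hexp : c * j + (M - c) * (j + d) = M * j + (M - c) * d := by
    rw [hM, Nat.add_sub_cancel_left]; ring
  rw [residueGenFun, hexp, mul_comm (distinctGenFun .univ j)]

end ResidueGenFun

lemma sum_antidiagonal_le_of_add_swap_le {A : Type*} [AddCommMonoid A] [LinearOrder A]
    [IsOrderedCancelAddMonoid A] {f g : ℕ → ℕ → A}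
    (h : ∀ i j, j ≤ i → f i j + f j i ≤ g i j + g j i) (m : ℕ) :
    ∑ ij ∈ antidiagonal m, f ij.1 ij.2 ≤ ∑ ij ∈ antidiagonal m, g ij.1 ij.2 := by
  have hswap (k : ℕ → ℕ → A) : 2 • ∑ ij ∈ antidiagonal m, k ij.1 ij.2 =
      ∑ ij ∈ antidiagonal m, (k ij.1 ij.2 + k ij.2 ij.1) := by
    rw [sum_add_distrib, two_nsmul]
    congr 1
    exact (Nat.sum_antidiagonal_swap (f := fun ij ↦ k ij.1 ij.2)).symm
  refine le_of_nsmul_le_nsmul_right two_ne_zero ?_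
  rw [hswap, hswap]
  refine sum_le_sum fun ⟨i, j⟩ _ ↦ ?_
  rcases le_total j i with hji | hij
  · exact h i j hji
  · simpa only [add_comm] using h j i hij

lemma mul_distinctGenFun_mul_mem_nonnegCoeff {s t i : ℕ} (hs : 0 < s) (hst : s < t) (hti : t ≤ i)
    (k j : ℕ) :
    (X ^ k + X ^ (k + s + t) - X ^ (k + s) - X ^ (k + t)) *
      (distinctGenFun .univ i * distinctGenFun .univ j) ∈ nonnegCoeff ℤ := by
  have hpair : {s, t} ⊆ Icc 1 i := by grind
  have hprod := prod_one_sub_X_pow_mul_distinctGenFun_mem_nonnegCoeff hpair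
  rw [prod_pair hst.ne] at hprod
  convert mul_mem (mul_mem (pow_mem X_mem_nonnegCoeff k) hprod)
    (distinctGenFun_mem_nonnegCoeff .univ j) using 1
  ring

lemma dvd_mul_of_gcd_dvd {M a b d : ℕ} (hgcd : b.gcd M ∣ a) (hd : M ∣ b * d) : M ∣ a * d := by
  have : M ∣ b.gcd M * d := by
    rw [← Nat.gcd_mul_right]
    exact Nat.dvd_gcd hd (dvd_mul_right M d)
  exact this.trans (mul_dvd_mul_right hgcd d)

lemma exists_exponents_of_dvd {M a b d : ℕ} (hab : a < b) (hb : 2 * b < M) (hgcd : b.gcd M ∣ a)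
    (hd : 0 < d) (hdvd : M ∣ b * d) :
    ∃ k s t, 0 < s ∧ s < t ∧ t ≤ d ∧ a * d = M * k ∧ b * d = M * (k + s) ∧
      (M - b) * d = M * (k + t) ∧ (M - a) * d = M * (k + s + t) := by
  obtain ⟨k, hk⟩ := dvd_mul_of_gcd_dvd hgcd hdvd
  obtain ⟨l, hl⟩ := hdvd
  have hkl : k < l := by
    refine lt_of_mul_lt_mul_left (a := M) ?_ M.zero_le
    rw [← hk, ← hl]
    gcongr
  have hld : 2 * l < d := by
    refine lt_of_mul_lt_mul_left (a := M) ?_ M.zero_le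
    calc M * (2 * l) = 2 * b * d := by rw [mul_left_comm, ← hl, mul_assoc]
      _ < M * d := by gcongr
  refine ⟨k, l - k, d - l - k, by omega, by omega, by omega, hk, ?_, ?_, ?_⟩
  · rw [hl, Nat.add_sub_cancel' hkl.le]
  · rw [Nat.sub_mul, hl, ← Nat.mul_sub]
    congr 1
    omega
  · rw [Nat.sub_mul, hk, ← Nat.mul_sub]
    congr 1
    omega

lemma coeff_residueGenFun_add_swap_le {M a b i j : ℕ} [NeZero M] (hab : a < b) (hb : 2 * b < M)
    (hgcd : b.gcd M ∣ a) (hji : j ≤ i) (n : ℕ) :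
    coeff (M * n) (residueGenFun M b (M - b) i j) + coeff (M * n) (residueGenFun M b (M - b) j i) ≤
      coeff (M * n) (residueGenFun M a (M - a) i j) +
        coeff (M * n) (residueGenFun M a (M - a) j i) := by
  obtain ⟨d, rfl⟩ := Nat.exists_eq_add_of_le hji
  rcases d.eq_zero_or_pos with rfl | hd
  · simp [residueGenFun, ← add_mul, show a + (M - a) = b + (M - b) by omega]
  by_cases hdvd : M ∣ b * d
  · obtain ⟨k, s, t, hs, hst, htd, hak, hbs, hbt, hast⟩ :=
      exists_exponents_of_dvd hab hb hgcd hd hdvd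
    have hnonneg :=
      mul_distinctGenFun_mul_mem_nonnegCoeff (i := j + d) hs hst (by omega) (j + k) j n
    rw [residueGenFun_add_left (by omega), residueGenFun_add_left (by omega),
      residueGenFun_add_right (by omega), residueGenFun_add_right (by omega), hak, hbs, hbt, hast]
    simp only [← mul_add, coeff_mul_X_pow_mul_expand]
    simp only [add_mul, sub_mul, map_sub, map_add] at hnonneg
    simp only [← add_assoc]
    linarith
  · have hdvd' : ¬M ∣ (M - b) * d := by
      rwa [Nat.sub_mul, Nat.dvd_sub_iff_right (by gcongr; omega) (dvd_mul_right M d)]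
    have hzero {k : ℕ} (hk : ¬ M ∣ k) (f : ℤ⟦X⟧) :
        coeff (M * n) (X ^ (M * j + k) * expand M (NeZero.ne M) f) = 0 :=
      coeff_mul_X_pow_mul_expand_of_not_dvd _ _ _ (by rwa [Nat.dvd_add_right (dvd_mul_right M j)])
    rw [residueGenFun_add_left (c := b) (by omega), residueGenFun_add_right (c := b) (by omega),
      hzero hdvd, hzero hdvd', add_zero]
    exact add_nonneg (residueGenFun_mem_nonnegCoeff _ _ _) (residueGenFun_mem_nonnegCoeff _ _ _)

lemma card_filter_partition_mod_eq {M c : ℕ} [NeZero M] (hc : 0 < c) (hcM : 2 * c < M) (m N : ℕ) :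
    (#{p : N.Partition | Multiset.card p.parts = m ∧ p.parts.Nodup ∧
        ∀ x ∈ p.parts, x % M = c ∨ x % M = M - c} : ℤ) =
      ∑ ij ∈ antidiagonal m, coeff N (residueGenFun M c (M - c) ij.1 ij.2) := by
  have h := card_filter_partition_eq_card_distinctSets (P := {x | x % M = c ∨ x % M = M - c})
    (by simp only [Set.mem_ofPred_eq, Nat.zero_mod]; omega) m N
  simp only [Set.mem_ofPred_eq] at h
  rw [h, ← coeff_distinctGenFun, distinctGenFun_mod_eq_or_mod_eq (by omega) (by omega) (by omega),
    map_sum]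

theorem distinct_partition_inequality_mod_M_general (M a b : ℕ) (ha : 1 ≤ a) (hab : a < b)
    (hb : 2 * b < M) (hgcd : b.gcd M ∣ a) (n m : ℕ) :
    (Finset.univ.filter (fun p : Nat.Partition (M * n) =>
        Multiset.card p.parts = m ∧ p.parts.Nodup ∧
        ∀ x ∈ p.parts, x % M = a ∨ x % M = M - a)).card ≥
    (Finset.univ.filter (fun p : Nat.Partition (M * n) =>
        Multiset.card p.parts = m ∧ p.parts.Nodup ∧
        ∀ x ∈ p.parts, x % M = b ∨ x % M = M - b)).card := by
  have : NeZero M := ⟨by omega⟩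
  rw [ge_iff_le, ← Nat.cast_le (α := ℤ), card_filter_partition_mod_eq (by omega) hb,
    card_filter_partition_mod_eq ha (by omega)]
  exact sum_antidiagonal_le_of_add_swap_le
    (fun i j hji ↦ coeff_residueGenFun_add_swap_le hab hb hgcd hji n) m

theorem distinct_partition_inequality_mod_M (M a b : ℕ) (hM : 5 ≤ M)
    (ha : 1 ≤ a) (hab : a < b) (hb : 2 * b < M)
    (haM : Nat.Coprime a M) (hbM : Nat.Coprime b M)
    (n m : ℕ) (hn : 1 ≤ n) (hm1 : 1 ≤ m) (hm2 : m ≤ M * n) :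
    (Finset.univ.filter (fun p : Nat.Partition (M * n) =>
        Multiset.card p.parts = m ∧ p.parts.Nodup ∧
        ∀ x ∈ p.parts, x % M = a ∨ x % M = M - a)).card ≥
    (Finset.univ.filter (fun p : Nat.Partition (M * n) =>
        Multiset.card p.parts = m ∧ p.parts.Nodup ∧
        ∀ x ∈ p.parts, x % M = b ∨ x % M = M - b)).card :=
  distinct_partition_inequality_mod_M_general M a b ha hab hb (hbM.gcd_eq_one ▸ one_dvd a) n m
end

section
/- For every integer n ≥ 1 and every integer m with 1 ≤ m ≤ 5n, the number of partitions of 5n into exactly m parts, each part congruent to 1 or 4 modulo 5, is greater than or equal to the number of partitions of 5n into exactly m parts, each part congruent to 2 or 3 modulo 5; that is, p_{1,5}(m, 5n) ≥ p_{2,5}(m, 5n). -/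
/-! Sort the parts of a partition of `k * n` into the classes `r` and `k - r` modulo `k`, let `a`
and `b` be the numbers of parts in each class, and replace every part by its quotient by `k`. The
generating function of the multisets of `a` naturals is `A a = ∏ i ∈ [1, a], 1 / (1 - q^i)`, so
these partitions are counted by the coefficient of `q^n` in `q^((r a + (k - r) b) / k) A a A b`, and
there are none if `k ∤ r (a - b)`. For `s` coprime to `k` this leaves only the pairs with
`k ∣ a - b`. If `a = b + k d`, the joint contribution of `(a, b)` and `(b, a)` for `r` minus the one
for `s` is `q^(b + r d) (1 - q^((s - r) d)) (1 - q^((k - s - r) d)) A a A b`. The two binomials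
cancel against distinct factors of the denominator of `A a`, so all coefficients are nonnegative. -/

open Finset PowerSeries

section NonnegCoeffs

/-- The power series all of whose coefficients are nonnegative. -/
def nonnegCoeffs (R : Type*) [Semiring R] [PartialOrder R] [IsOrderedRing R] :
    Subsemiring R⟦X⟧ where
  carrier := {φ | ∀ n, 0 ≤ coeff n φ}
  zero_mem' n := by simp
  one_mem' n := by rw [coeff_one]; split_ifs <;> simp
  add_mem' hφ hψ n := by rw [map_add]; exact add_nonneg (hφ n) (hψ n)
  mul_mem' hφ hψ n := by
    rw [coeff_mul]
    exact sum_nonneg fun ij _ ↦ mul_nonneg (hφ ij.1) (hψ ij.2)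

section Semiring

variable {R : Type*} [Semiring R] [PartialOrder R] [IsOrderedRing R]

theorem mem_nonnegCoeffs {φ : R⟦X⟧} : φ ∈ nonnegCoeffs R ↔ ∀ n, 0 ≤ coeff n φ := Iff.rfl

theorem X_mem_nonnegCoeffs : X ∈ nonnegCoeffs R := fun n ↦ by
  rw [coeff_X]; split_ifs <;> simp

end Semiring

variable {R : Type*} [CommRing R] [PartialOrder R] [IsOrderedRing R] {φ : R⟦X⟧}

theorem expand_mem_nonnegCoeffs {k : ℕ} (hk : k ≠ 0) (hφ : φ ∈ nonnegCoeffs R) :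
    expand k hk φ ∈ nonnegCoeffs R := fun n ↦ by
  rw [coeff_expand]; split_ifs <;> simp [mem_nonnegCoeffs.1 hφ]

theorem mem_nonnegCoeffs_of_mul_one_sub_X_pow {i : ℕ} (hi : i ≠ 0)
    (h : φ * (1 - X ^ i) ∈ nonnegCoeffs R) : φ ∈ nonnegCoeffs R := by
  have geom : (1 - X ^ i) * expand i hi (mk 1 : R⟦X⟧) = 1 := by
    rw [mul_comm, ← expand_X i hi, ← map_one (expand i hi), ← map_sub, ← map_mul,
      mk_one_mul_one_sub_eq_one]
  rw [← mul_one φ, ← geom, ← mul_assoc]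
  exact mul_mem h (expand_mem_nonnegCoeffs hi fun n ↦ by simp)

theorem mem_nonnegCoeffs_of_mul_prod_one_sub_X_pow {s : Finset ℕ} (hs : 0 ∉ s)
    (h : φ * ∏ i ∈ s, (1 - X ^ i) ∈ nonnegCoeffs R) : φ ∈ nonnegCoeffs R := by
  induction s using Finset.induction_on with
  | empty => simpa using h
  | insert i s his ih =>
    rw [prod_insert his, ← mul_assoc, mul_right_comm] at h
    rw [mem_insert, not_or] at hs
    exact ih hs.2 (mem_nonnegCoeffs_of_mul_one_sub_X_pow (Ne.symm hs.1) h)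

end NonnegCoeffs

section Multiset

theorem filter_mem_add_of_disjoint {α : Type*} {S T : Set α} [DecidablePred (· ∈ S)]
    (hST : Disjoint S T) {u v : Multiset α} (hu : ∀ x ∈ u, x ∈ S)
    (hv : ∀ x ∈ v, x ∈ T) : (u + v).filter (· ∈ S) = u := by
  have hvS : ∀ x ∈ v, x ∉ S := fun x hx hxS ↦ Set.disjoint_left.1 hST hxS (hv x hx)
  rw [Multiset.filter_add, Multiset.filter_eq_self.2 hu, Multiset.filter_eq_nil.2 hvS, add_zero]

theorem sum_map_mul_add {R : Type*} [NonUnitalNonAssocSemiring R] (k r : R) (u : Multiset R) :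
    (u.map fun x ↦ k * x + r).sum = k * u.sum + u.card • r := by
  rw [Multiset.sum_map_add, Multiset.sum_map_mul_left, Multiset.map_id', Multiset.map_const',
    Multiset.sum_replicate]

end Multiset

section MultisetSeries

open Classical in
/-- The multisets of `a` elements of `S` with sum `n`. The elements are bounded by `n`, which makes
this a finite set. -/
noncomputable def multisetsOfCardSum (S : Set ℕ) (a n : ℕ) : Finset (Multiset ℕ) :=
  (((range (n + 1)).sym a).image (↑)).filter fun s ↦ s.sum = n ∧ ∀ x ∈ s, x ∈ S

/-- The generating function of the multisets of `a` elements of `S`, by sum. -/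
noncomputable def multisetSeries (S : Set ℕ) (a : ℕ) : ℤ⟦X⟧ :=
  mk fun n ↦ (#(multisetsOfCardSum S a n) : ℤ)

variable {S T : Set ℕ} {s : Multiset ℕ} {a n : ℕ}

theorem mem_multisetsOfCardSum :
    s ∈ multisetsOfCardSum S a n ↔ s.card = a ∧ s.sum = n ∧ ∀ x ∈ s, x ∈ S := by
  simp only [multisetsOfCardSum, mem_filter, mem_image, mem_sym_iff, Finset.mem_range]
  constructor
  · rintro ⟨⟨u, -, rfl⟩, hs⟩
    exact ⟨u.2, hs⟩
  · rintro ⟨hcard, hsum, hS⟩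
    refine ⟨⟨⟨s, hcard⟩, fun x hx ↦ ?_, rfl⟩, hsum, hS⟩
    exact Nat.lt_succ_of_le (hsum ▸ Multiset.le_sum_of_mem hx)

theorem coeff_multisetSeries (S : Set ℕ) (a n : ℕ) :
    coeff n (multisetSeries S a) = #(multisetsOfCardSum S a n) := coeff_mk n _

theorem multisetSeries_mem_nonnegCoeffs (S : Set ℕ) (a : ℕ) :
    multisetSeries S a ∈ nonnegCoeffs ℤ := fun n ↦ by
  simp [coeff_multisetSeries]

theorem multisetSeries_zero (S : Set ℕ) : multisetSeries S 0 = 1 := by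
  ext n
  have h : multisetsOfCardSum S 0 n = if n = 0 then {0} else ∅ := by
    ext s
    rw [mem_multisetsOfCardSum, Multiset.card_eq_zero]
    split_ifs <;> aesop
  rw [coeff_multisetSeries, coeff_one, h]
  split_ifs <;> simp

theorem multisetSeries_singleton_zero (a : ℕ) : multisetSeries {0} a = 1 := by
  ext n
  have h : multisetsOfCardSum {0} a n = if n = 0 then {Multiset.replicate a 0} else ∅ := by
    ext s
    simp only [mem_multisetsOfCardSum, Set.mem_singleton_iff]
    split_ifs with hn
    · rw [mem_singleton, Multiset.eq_replicate, hn]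
      exact ⟨fun h ↦ ⟨h.1, h.2.2⟩, fun h ↦ ⟨h.1, Multiset.sum_eq_zero h.2, h.2⟩⟩
    · simp only [notMem_empty, iff_false, not_and]
      exact fun _ hsum h0 ↦ hn (hsum ▸ Multiset.sum_eq_zero h0)
  rw [coeff_multisetSeries, coeff_one, h]
  split_ifs <;> simp

theorem card_multisetsOfCardSum_union (hST : Disjoint S T) (m n : ℕ) :
    #(multisetsOfCardSum (S ∪ T) m n) = ∑ ab ∈ antidiagonal m, ∑ ij ∈ antidiagonal n,
      #(multisetsOfCardSum S ab.1 ij.1) * #(multisetsOfCardSum T ab.2 ij.2) := by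
  classical
  simp_rw [← sum_product', ← card_product, ← card_sigma]
  symm
  refine card_nbij (fun x ↦ x.2.1 + x.2.2) ?_ ?_ ?_
  · rintro ⟨⟨⟨a, b⟩, i, j⟩, u, v⟩ h
    simp only [coe_sigma, Set.mem_sigma_iff, mem_coe, mem_product,
      HasAntidiagonal.mem_antidiagonal, mem_multisetsOfCardSum] at h ⊢
    obtain ⟨⟨rfl, rfl⟩, ⟨rfl, rfl, hu⟩, rfl, rfl, hv⟩ := h
    exact ⟨by simp, by simp, fun x hx ↦ (Multiset.mem_add.1 hx).imp (hu x) (hv x)⟩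
  · rintro ⟨⟨⟨a, b⟩, i, j⟩, u, v⟩ h ⟨⟨⟨a', b'⟩, i', j'⟩, u', v'⟩ h' heq
    simp only [coe_sigma, Set.mem_sigma_iff, mem_coe, mem_product, mem_multisetsOfCardSum]
      at h h' heq
    obtain ⟨-, ⟨rfl, rfl, hu⟩, rfl, rfl, hv⟩ := h
    obtain ⟨-, ⟨rfl, rfl, hu'⟩, rfl, rfl, hv'⟩ := h'
    obtain rfl : u = u' := by
      rw [← filter_mem_add_of_disjoint hST hu hv, heq, filter_mem_add_of_disjoint hST hu' hv']
    obtain rfl : v = v' := add_left_cancel heq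
    rfl
  · intro s hmem
    obtain ⟨hcard, hsum, hs⟩ := mem_multisetsOfCardSum.1 hmem
    have hadd := s.filter_add_not (· ∈ S)
    refine ⟨⟨⟨((s.filter (· ∈ S)).card, (s.filter (· ∉ S)).card),
      ((s.filter (· ∈ S)).sum, (s.filter (· ∉ S)).sum)⟩,
      (s.filter (· ∈ S), s.filter (· ∉ S))⟩, ?_, hadd⟩
    simp only [coe_sigma, Set.mem_sigma_iff, mem_coe, mem_product,
      HasAntidiagonal.mem_antidiagonal, mem_multisetsOfCardSum, ← Multiset.card_add,
      ← Multiset.sum_add, hadd, hcard, hsum, true_and, Multiset.mem_filter]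
    exact ⟨fun x hx ↦ hx.2, fun x hx ↦ (hs x hx.1).resolve_left hx.2⟩

theorem multisetSeries_union (hST : Disjoint S T) (m : ℕ) :
    multisetSeries (S ∪ T) m =
      ∑ ab ∈ antidiagonal m, multisetSeries S ab.1 * multisetSeries T ab.2 := by
  ext n
  simp only [map_sum, coeff_mul, coeff_multisetSeries, card_multisetsOfCardSum_union hST]
  push_cast
  rfl

theorem exists_map_eq_of_mem_multisetsOfCardSum_range {k r : ℕ}
    (hmem : s ∈ multisetsOfCardSum (Set.range fun x ↦ k * x + r) a n) :
    ∃ u : Multiset ℕ, u.map (fun x ↦ k * x + r) = s ∧ u.card = a ∧ n = k * u.sum + r * a := by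
  obtain ⟨rfl, rfl, hs⟩ := mem_multisetsOfCardSum.1 hmem
  have : CanLift ℕ ℕ (fun x ↦ k * x + r) (· ∈ Set.range fun x ↦ k * x + r) := ⟨fun _ h ↦ h⟩
  lift s to Multiset ℕ using hs
  exact ⟨s, rfl, by simp, by rw [sum_map_mul_add, Multiset.card_map, smul_eq_mul, mul_comm r]⟩

theorem card_multisetsOfCardSum_range {k : ℕ} (hk : k ≠ 0) (r a n : ℕ) :
    #(multisetsOfCardSum (Set.range fun x ↦ k * x + r) a (k * n + r * a)) =
      #(multisetsOfCardSum Set.univ a n) := by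
  symm
  refine card_nbij (Multiset.map fun x ↦ k * x + r) (fun u hu ↦ ?_) ?_ (fun s hs ↦ ?_)
  · obtain ⟨rfl, rfl, -⟩ := mem_multisetsOfCardSum.1 hu
    exact mem_multisetsOfCardSum.2 ⟨Multiset.card_map _ u,
      by rw [sum_map_mul_add, smul_eq_mul, mul_comm r], by simp⟩
  · exact (Multiset.map_injective fun x y hxy ↦ by simpa [hk] using hxy).injOn
  · obtain ⟨u, rfl, rfl, hn⟩ := exists_map_eq_of_mem_multisetsOfCardSum_range hs
    have hsum : n = u.sum := by simpa [hk] using hn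
    exact ⟨u, by simp [mem_multisetsOfCardSum, hsum], rfl⟩

theorem multisetSeries_range {k : ℕ} (hk : k ≠ 0) (r a : ℕ) :
    multisetSeries (Set.range fun x ↦ k * x + r) a =
      X ^ (r * a) * expand k hk (multisetSeries Set.univ a) := by
  ext n
  rw [coeff_multisetSeries]
  by_cases hn : ∃ i, n = k * i + r * a
  · obtain ⟨i, rfl⟩ := hn
    rw [card_multisetsOfCardSum_range hk, coeff_X_pow_mul, coeff_expand_mul,
      coeff_multisetSeries]
  · have hempty : multisetsOfCardSum (Set.range fun x ↦ k * x + r) a n = ∅ := by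
      refine eq_empty_of_forall_notMem fun s hs ↦ hn ?_
      obtain ⟨u, -, -, hu⟩ := exists_map_eq_of_mem_multisetsOfCardSum_range hs
      exact ⟨u.sum, hu⟩
    rw [hempty, card_empty, Nat.cast_zero, coeff_X_pow_mul']
    split_ifs with hle
    · rw [coeff_expand_of_not_dvd]
      rintro ⟨i, hi⟩
      exact hn ⟨i, by omega⟩
    · rfl

theorem multisetSeries_univ_eq_sum (a : ℕ) :
    multisetSeries Set.univ a = ∑ j ∈ range (a + 1), X ^ j * multisetSeries Set.univ j := by
  have huniv : (Set.univ : Set ℕ) = Set.range (fun x ↦ 1 * x + 1) ∪ {0} := by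
    ext x
    cases x <;> simp
  have hdisj : Disjoint (Set.range fun x ↦ 1 * x + 1) ({0} : Set ℕ) := by simp
  conv_lhs => rw [huniv, multisetSeries_union hdisj]
  simp only [multisetSeries_range one_ne_zero, multisetSeries_singleton_zero, expand_one_apply]
  simp only [one_mul, mul_one]
  exact Nat.sum_antidiagonal_eq_sum_range_succ (fun j _ ↦ X ^ j * multisetSeries Set.univ j) a

theorem multisetSeries_univ_succ_mul_one_sub_X_pow (a : ℕ) :
    multisetSeries Set.univ (a + 1) * (1 - X ^ (a + 1)) = multisetSeries Set.univ a := by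
  have h := multisetSeries_univ_eq_sum (a + 1)
  rw [sum_range_succ, ← multisetSeries_univ_eq_sum a] at h
  linear_combination h

theorem multisetSeries_univ_mul_prod_one_sub_X_pow (a : ℕ) :
    multisetSeries Set.univ a * ∏ i ∈ Icc 1 a, (1 - X ^ i) = 1 := by
  induction a with
  | zero => simp [multisetSeries_zero]
  | succ a ih =>
    rw [prod_Icc_succ_top (by omega), mul_comm (∏ i ∈ Icc 1 a, _), ← mul_assoc,
      multisetSeries_univ_succ_mul_one_sub_X_pow, ih]

theorem multisetSeries_univ_mul_prod_mem_nonnegCoeffs {s : Finset ℕ} (hs : s ⊆ Icc 1 a) :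
    multisetSeries Set.univ a * ∏ i ∈ s, (1 - X ^ i) ∈ nonnegCoeffs ℤ := by
  refine mem_nonnegCoeffs_of_mul_prod_one_sub_X_pow (s := Icc 1 a \ s) (by simp) ?_
  rw [mul_assoc, mul_comm (∏ i ∈ s, _), prod_sdiff hs,
    multisetSeries_univ_mul_prod_one_sub_X_pow]
  exact one_mem _

theorem multisetSeries_univ_mul_pair_mem_nonnegCoeffs {i j : ℕ} (hi : 0 < i) (hij : i < j)
    (hja : j ≤ a) :
    multisetSeries Set.univ a * ((1 - X ^ i) * (1 - X ^ j)) ∈ nonnegCoeffs ℤ := by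
  rw [← prod_pair (f := fun i ↦ 1 - (X : ℤ⟦X⟧) ^ i) hij.ne]
  refine multisetSeries_univ_mul_prod_mem_nonnegCoeffs fun x hx ↦ ?_
  rw [mem_insert, mem_singleton] at hx
  rw [mem_Icc]
  omega

theorem card_partition_eq_coeff_multisetSeries (p : ℕ → Prop) [DecidablePred p] (n m : ℕ)
    (h0 : ¬ p 0) :
    (#{q : Nat.Partition n | q.parts.card = m ∧ ∀ x ∈ q.parts, p x} : ℤ) =
      coeff n (multisetSeries {x | p x} m) := by
  rw [coeff_multisetSeries, Nat.cast_inj]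
  refine card_nbij Nat.Partition.parts (fun q hq ↦ ?_) (fun q _ q' _ h ↦ Nat.Partition.ext h)
    (fun s hs ↦ ?_)
  · obtain ⟨hcard, hp⟩ := (mem_filter.1 hq).2
    exact mem_multisetsOfCardSum.2 ⟨hcard, q.parts_sum, hp⟩
  · obtain ⟨hcard, hsum, hp⟩ := mem_multisetsOfCardSum.1 hs
    have hpos {x : ℕ} (hx : x ∈ s) : 0 < x :=
      Nat.pos_of_ne_zero fun hx0 ↦ h0 (hx0 ▸ hp x hx)
    exact ⟨⟨s, hpos, hsum⟩, by simpa using! ⟨hcard, hp⟩, rfl⟩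

end MultisetSeries

section ResidueClasses

/-- The generating function, by sum, of the multisets consisting of `a` naturals with residue `r`
and `b` naturals with residue `k - r` modulo `k`. -/
noncomputable def oppositeResidueSeries (k r a b : ℕ) : ℤ⟦X⟧ :=
  multisetSeries {x | x % k = r} a * multisetSeries {x | x % k = k - r} b

variable {k r s : ℕ}

theorem ofPred_mod_eq_range (hr : r < k) : {x | x % k = r} = Set.range fun x ↦ k * x + r := by
  ext x
  constructor
  · rintro rfl
    exact ⟨x / k, Nat.div_add_mod x k⟩
  · rintro ⟨y, rfl⟩
    simp [Nat.mod_eq_of_lt hr]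

theorem oppositeResidueSeries_eq (hr0 : 0 < r) (hr : r < k) (a b : ℕ) :
    oppositeResidueSeries k r a b = X ^ (r * a + (k - r) * b) *
      expand k (by omega) (multisetSeries Set.univ a * multisetSeries Set.univ b) := by
  rw [oppositeResidueSeries, ofPred_mod_eq_range hr, ofPred_mod_eq_range (by omega : k - r < k),
    multisetSeries_range (by omega), multisetSeries_range (by omega), map_mul, pow_add]
  ring

theorem oppositeResidueSeries_mem_nonnegCoeffs (k r a b : ℕ) :
    oppositeResidueSeries k r a b ∈ nonnegCoeffs ℤ :=
  mul_mem (multisetSeries_mem_nonnegCoeffs _ a) (multisetSeries_mem_nonnegCoeffs _ b)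

theorem coeff_oppositeResidueSeries_of_eq_mul (hr0 : 0 < r) (hr : r < k) {a b e : ℕ}
    (h : r * a + (k - r) * b = k * e) (n : ℕ) :
    coeff (k * n) (oppositeResidueSeries k r a b) =
      coeff n (X ^ e * (multisetSeries Set.univ a * multisetSeries Set.univ b)) := by
  have hk : k ≠ 0 := by omega
  rw [oppositeResidueSeries_eq hr0 hr, h, pow_mul, ← expand_X k hk, ← map_pow, ← map_mul,
    coeff_expand_mul]

theorem coeff_oppositeResidueSeries_of_not_dvd (hr0 : 0 < r) (hr : r < k) {a b : ℕ}
    (h : ¬ k ∣ r * a + (k - r) * b) (n : ℕ) :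
    coeff (k * n) (oppositeResidueSeries k r a b) = 0 := by
  rw [oppositeResidueSeries_eq hr0 hr, coeff_X_pow_mul']
  split_ifs with hle
  · refine coeff_expand_of_not_dvd k _ _ fun hdvd ↦ h ?_
    exact (Nat.dvd_sub_iff_right hle (dvd_mul_right k n)).1 hdvd
  · rfl

theorem dvd_mul_add_sub_mul_iff (hs : s ≤ k) (hcop : s.Coprime k) (a b : ℕ) :
    k ∣ s * a + (k - s) * b ↔ (k : ℤ) ∣ a - b := by
  have h : ((s * a + (k - s) * b : ℕ) : ℤ) = s * (a - b) + k * b := by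
    push_cast [Nat.cast_sub hs]
    ring
  rw [← Int.natCast_dvd_natCast, h, dvd_add_left (dvd_mul_right _ _)]
  exact ⟨(Nat.isCoprime_iff_coprime.2 hcop.symm).dvd_of_dvd_mul_left, (·.mul_left _)⟩

theorem coeff_oppositeResidueSeries_add_swap_eq (hr0 : 0 < r) (hr : r < k) (n b d : ℕ) :
    coeff (k * n) (oppositeResidueSeries k r (b + k * d) b) +
        coeff (k * n) (oppositeResidueSeries k r b (b + k * d)) =
      coeff n ((X ^ (b + r * d) + X ^ (b + (k - r) * d)) *
        (multisetSeries Set.univ (b + k * d) * multisetSeries Set.univ b)) := by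
  have hexp : r * (b + k * d) + (k - r) * b = k * (b + r * d) := by
    zify [hr.le]; ring
  have hexp_swap : r * b + (k - r) * (b + k * d) = k * (b + (k - r) * d) := by
    zify [hr.le]; ring
  rw [coeff_oppositeResidueSeries_of_eq_mul hr0 hr hexp,
    coeff_oppositeResidueSeries_of_eq_mul hr0 hr hexp_swap, add_mul, map_add,
    mul_comm (multisetSeries Set.univ b)]

theorem coeff_oppositeResidueSeries_add_swap_le_of_eq_add_mul (hr : 0 < r) (hrs : r < s)
    (hs : 2 * s < k) (n b d : ℕ) :
    coeff (k * n) (oppositeResidueSeries k s (b + k * d) b) +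
        coeff (k * n) (oppositeResidueSeries k s b (b + k * d)) ≤
      coeff (k * n) (oppositeResidueSeries k r (b + k * d) b) +
        coeff (k * n) (oppositeResidueSeries k r b (b + k * d)) := by
  rw [coeff_oppositeResidueSeries_add_swap_eq hr (by omega),
    coeff_oppositeResidueSeries_add_swap_eq (by omega) (by omega)]
  obtain rfl | hd := Nat.eq_zero_or_pos d
  · simp
  obtain ⟨u, rfl⟩ := Nat.exists_eq_add_of_le hrs.le
  obtain ⟨w, rfl⟩ := Nat.exists_eq_add_of_le (by omega : r + (r + u) ≤ k)
  rw [show r + (r + u) + w - r = r + u + w by omega,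
    show r + (r + u) + w - (r + u) = r + w by omega]
  set A := multisetSeries Set.univ (b + (r + (r + u) + w) * d)
  set B := multisetSeries Set.univ b
  have hA : A * ((1 - X ^ (u * d)) * (1 - X ^ (w * d))) ∈ nonnegCoeffs ℤ :=
    multisetSeries_univ_mul_pair_mem_nonnegCoeffs (Nat.mul_pos (by omega) hd)
      (Nat.mul_lt_mul_of_pos_right (by omega) hd) (by nlinarith)
  have hfactor : (X ^ (b + r * d) + X ^ (b + (r + u + w) * d)) * (A * B) -
      (X ^ (b + (r + u) * d) + X ^ (b + (r + w) * d)) * (A * B) =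
        X ^ (b + r * d) * (A * ((1 - X ^ (u * d)) * (1 - X ^ (w * d)))) * B := by
    ring
  rw [← sub_nonneg, ← map_sub, hfactor]
  exact mul_mem (mul_mem (pow_mem X_mem_nonnegCoeffs _) hA)
    (multisetSeries_mem_nonnegCoeffs _ b) n

theorem coeff_oppositeResidueSeries_add_swap_le (hr : 0 < r) (hrs : r < s) (hs : 2 * s < k)
    (hcop : s.Coprime k) (n a b : ℕ) :
    coeff (k * n) (oppositeResidueSeries k s a b) +
        coeff (k * n) (oppositeResidueSeries k s b a) ≤
      coeff (k * n) (oppositeResidueSeries k r a b) +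
        coeff (k * n) (oppositeResidueSeries k r b a) := by
  wlog hba : b ≤ a generalizing a b
  · linarith [this b a (by omega)]
  by_cases hdvd : (k : ℤ) ∣ a - b
  · obtain ⟨d, hd⟩ : k ∣ a - b := by rwa [← Int.natCast_dvd_natCast, Nat.cast_sub hba]
    obtain rfl : a = b + k * d := by omega
    exact coeff_oppositeResidueSeries_add_swap_le_of_eq_add_mul hr hrs hs n b d
  · have hab : ¬ k ∣ s * a + (k - s) * b := by
      rwa [dvd_mul_add_sub_mul_iff (by omega) hcop]
    have hba' : ¬ k ∣ s * b + (k - s) * a := by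
      rwa [dvd_mul_add_sub_mul_iff (by omega) hcop, dvd_sub_comm]
    rw [coeff_oppositeResidueSeries_of_not_dvd (by omega) (by omega) hab,
      coeff_oppositeResidueSeries_of_not_dvd (by omega) (by omega) hba', add_zero]
    exact add_nonneg (oppositeResidueSeries_mem_nonnegCoeffs k r a b _)
      (oppositeResidueSeries_mem_nonnegCoeffs k r b a _)

theorem card_partition_mod_eq_sum_coeff (hr : 0 < r) (hrk : 2 * r < k) (N m : ℕ) :
    (#{p : Nat.Partition N | p.parts.card = m ∧ ∀ x ∈ p.parts, x % k = r ∨ x % k = k - r} : ℤ) =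
      ∑ ab ∈ antidiagonal m, coeff N (oppositeResidueSeries k r ab.1 ab.2) := by
  have hdisj : Disjoint {x | x % k = r} {x | x % k = k - r} :=
    Set.disjoint_left.2 fun x (hx : x % k = r) (hx' : x % k = k - r) ↦ by omega
  rw [card_partition_eq_coeff_multisetSeries (fun x ↦ x % k = r ∨ x % k = k - r) N m
    (by rw [Nat.zero_mod]; omega), Set.ofPred_or, multisetSeries_union hdisj, map_sum]
  rfl

end ResidueClasses

theorem partition_inequality_mod_five_general {k r s : ℕ} (hr : 0 < r) (hrs : r < s)
    (hs : 2 * s < k) (hcop : s.Coprime k) (n m : ℕ) :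
    #{p : Nat.Partition (k * n) | p.parts.card = m ∧
        ∀ x ∈ p.parts, x % k = s ∨ x % k = k - s} ≤
      #{p : Nat.Partition (k * n) | p.parts.card = m ∧
        ∀ x ∈ p.parts, x % k = r ∨ x % k = k - r} := by
  have hsum := sum_le_sum (s := antidiagonal m) fun ab _ ↦
    coeff_oppositeResidueSeries_add_swap_le hr hrs hs hcop n ab.1 ab.2
  have hswap (t : ℕ) :
      ∑ ab ∈ antidiagonal m, coeff (k * n) (oppositeResidueSeries k t ab.2 ab.1) =
        ∑ ab ∈ antidiagonal m, coeff (k * n) (oppositeResidueSeries k t ab.1 ab.2) :=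
    Nat.sum_antidiagonal_swap (f := fun ab ↦ coeff (k * n) (oppositeResidueSeries k t ab.1 ab.2))
  rw [sum_add_distrib, sum_add_distrib, hswap, hswap,
    ← card_partition_mod_eq_sum_coeff (by omega) hs,
    ← card_partition_mod_eq_sum_coeff hr (by omega)] at hsum
  omega

theorem partition_inequality_mod_five (n m : ℕ) (hn : 1 ≤ n) (hm1 : 1 ≤ m) (hm2 : m ≤ 5 * n) :
    (Finset.univ.filter (fun p : Nat.Partition (5 * n) =>
        Multiset.card p.parts = m ∧
        ∀ x ∈ p.parts, x % 5 = 1 ∨ x % 5 = 4)).card ≥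
    (Finset.univ.filter (fun p : Nat.Partition (5 * n) =>
        Multiset.card p.parts = m ∧
        ∀ x ∈ p.parts, x % 5 = 2 ∨ x % 5 = 3)).card :=
  partition_inequality_mod_five_general (k := 5) (r := 1) (s := 2) (by decide) (by decide)
    (by decide) (by decide) n m
end
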